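/- arXiv:1205.2133 — 5 statements merged into one kernel-verified Lean document; each statement's English description precedes it below -/
import Mathlib

section
/- Let A : ℝ → Matrix (Fin n) (Fin n) ℝ be continuous and let Φ : ℝ → Matrix (Fin n) (Fin n) ℝ satisfy Φ'(t) = A(t) · Φ(t) for all t (in the sense that each entry function is differentiable with the stated derivative). If Φ(t₀) is invertible for some t₀ ∈ ℝ, then Φ(t) is invertible for every t ∈ ℝ. -/
/-!
For a constant vector `v` the curve `x(t) = Φ(t)v` solves `ẋ = A(t)x`, so `‖ẋ‖` is locally bounded
by a multiple of `‖x‖`. By Grönwall's inequality such a curve vanishes everywhere as soon as it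
vanishes at one point, so the kernel of `Φ(t)` does not depend on `t`.
-/

open Set Filter Asymptotics Matrix
open scoped Topology

lemma isBigO_principal_of_isCompact {X E F : Type*} [TopologicalSpace X]
    [Norm E] [SeminormedAddCommGroup F] {f : X → E} {g : X → F} {K : Set X}
    (hK : IsCompact K) (hfg : ∀ x ∈ K, f =O[𝓝[K] x] g) : f =O[𝓟 K] g := by
  refine hK.induction_on (p := fun s => f =O[𝓟 s] g) (by simp)
    (fun s t hst ht => ht.mono (principal_mono.2 hst))
    (fun s t hs ht => sup_principal (s := s) (t := t) ▸ hs.sup ht) fun x hx => ?_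
  obtain ⟨c, hc⟩ := (hfg x hx).bound
  exact ⟨_, hc, isBigO_principal.2 ⟨c, fun _ hy => hy⟩⟩

section Gronwall

variable {E : Type*} [NormedAddCommGroup E] [NormedSpace ℝ E] {f f' : ℝ → E} {a b : ℝ}

lemma eqOn_zero_of_deriv_isBigO_self_of_left_eq_zero
    (hf : ∀ t ∈ Icc a b, HasDerivWithinAt f (f' t) (Icc a b) t)
    (hf' : f' =O[𝓟 (Icc a b)] f) (ha : f a = 0) : EqOn f 0 (Icc a b) := by
  obtain ⟨K, hK⟩ := isBigO_principal.1 hf'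
  exact eq_zero_of_abs_deriv_le_mul_abs_self_of_eq_zero_right
    (fun t ht => (hf t ht).continuousWithinAt)
    (fun t ht => (hf t (Ico_subset_Icc_self ht)).mono_of_mem_nhdsWithin (Icc_mem_nhdsGE_of_mem ht))
    ha fun t ht => hK t (Ico_subset_Icc_self ht)

lemma eqOn_zero_of_deriv_isBigO_self_of_right_eq_zero
    (hf : ∀ t ∈ Icc a b, HasDerivWithinAt f (f' t) (Icc a b) t)
    (hf' : f' =O[𝓟 (Icc a b)] f) (hb : f b = 0) : EqOn f 0 (Icc a b) := by
  have maps_neg : MapsTo (fun t : ℝ => -t) (Icc (-b) (-a)) (Icc a b) := fun t ht =>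
    ⟨le_neg_of_le_neg ht.2, neg_le_of_neg_le ht.1⟩
  have reflected_zero : EqOn (fun t => f (-t)) 0 (Icc (-b) (-a)) := by
    refine eqOn_zero_of_deriv_isBigO_self_of_left_eq_zero (f' := fun t => -f' (-t))
      (fun t ht => ?_) ?_ (by simpa using hb)
    · simpa [Function.comp_def] using
        (hf (-t) (maps_neg ht)).scomp t (hasDerivAt_neg t).hasDerivWithinAt maps_neg
    · exact (hf'.comp_tendsto (tendsto_principal_principal.2 maps_neg)).neg_left
  intro t ht
  simpa using reflected_zero (x := -t) ⟨neg_le_neg ht.2, neg_le_neg ht.1⟩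

theorem eqOn_zero_of_deriv_isBigO_self {s : Set ℝ} (hs : s.OrdConnected)
    (hf : ∀ t ∈ s, HasDerivWithinAt f (f' t) s t) (hf' : ∀ t ∈ s, f' =O[𝓝[s] t] f)
    {t₀ : ℝ} (ht₀ : t₀ ∈ s) (h₀ : f t₀ = 0) : EqOn f 0 s := by
  have deriv_on {a b : ℝ} (hab : Icc a b ⊆ s) (t : ℝ) (ht : t ∈ Icc a b) :
      HasDerivWithinAt f (f' t) (Icc a b) t := (hf t (hab ht)).mono hab
  have isBigO_on {a b : ℝ} (hab : Icc a b ⊆ s) : f' =O[𝓟 (Icc a b)] f :=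
    isBigO_principal_of_isCompact isCompact_Icc fun t ht =>
      (hf' t (hab ht)).mono (nhdsWithin_mono t hab)
  intro t ht
  rcases le_total t₀ t with hle | hle
  · have hsub := hs.out ht₀ ht
    exact eqOn_zero_of_deriv_isBigO_self_of_left_eq_zero (deriv_on hsub) (isBigO_on hsub) h₀
      (right_mem_Icc.2 hle)
  · have hsub := hs.out ht ht₀
    exact eqOn_zero_of_deriv_isBigO_self_of_right_eq_zero (deriv_on hsub) (isBigO_on hsub) h₀
      (left_mem_Icc.2 hle)

end Gronwall

lemma isBigO_mulVec_of_isBigO_one {α R ι κ : Type*} [SeminormedRing R] [Fintype ι] [Fintype κ]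
    {l : Filter α} {A : α → Matrix ι κ R} (hA : ∀ i j, (A · i j) =O[l] (1 : α → ℝ))
    (x : α → κ → R) : (fun t => A t *ᵥ x t) =O[l] x := by
  refine isBigO_pi.2 fun i => IsBigO.fun_sum fun j _ => ?_
  have coord : (x · j) =O[l] x := isBigO_pi.1 (isBigO_refl x l) j
  simpa using (hA i j).mul coord.norm_right

lemma hasDerivWithinAt_mulVec_const {𝕜 R ι κ : Type*} [NontriviallyNormedField 𝕜] [NormedRing R]
    [NormedAlgebra 𝕜 R] [Fintype κ] {Φ : 𝕜 → Matrix ι κ R} {Φ' : Matrix ι κ R} {s : Set 𝕜} {t : 𝕜}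
    (hΦ : ∀ i j, HasDerivWithinAt (Φ · i j) (Φ' i j) s t) (v : κ → R) :
    HasDerivWithinAt (fun r => Φ r *ᵥ v) (Φ' *ᵥ v) s t :=
  hasDerivWithinAt_pi.2 fun i => HasDerivWithinAt.fun_sum fun j _ => (hΦ i j).mul_const (v j)

theorem mulVec_eq_zero_of_hasDerivWithinAt_mul {R ι κ : Type*} [NormedRing R] [NormedAlgebra ℝ R]
    [Fintype ι] [Fintype κ] {s : Set ℝ} (hs : s.OrdConnected)
    {A : ℝ → Matrix ι ι R} {Φ : ℝ → Matrix ι κ R}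
    (hA : ∀ t ∈ s, ∀ i j, (A · i j) =O[𝓝[s] t] (1 : ℝ → ℝ))
    (hΦ : ∀ t ∈ s, ∀ i j, HasDerivWithinAt (Φ · i j) ((A t * Φ t) i j) s t)
    {t₀ t : ℝ} (ht₀ : t₀ ∈ s) (ht : t ∈ s) {v : κ → R} (hv : Φ t₀ *ᵥ v = 0) :
    Φ t *ᵥ v = 0 := by
  have deriv_mulVec (r : ℝ) (hr : r ∈ s) :
      HasDerivWithinAt (fun r => Φ r *ᵥ v) (A r *ᵥ (Φ r *ᵥ v)) s r :=
    mulVec_mulVec v (A r) (Φ r) ▸ hasDerivWithinAt_mulVec_const (hΦ r hr) v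
  exact eqOn_zero_of_deriv_isBigO_self hs deriv_mulVec
    (fun r hr => isBigO_mulVec_of_isBigO_one (hA r hr) _) ht₀ hv ht

theorem stmt_0_general {𝕜 ι : Type*} [NormedField 𝕜] [NormedAlgebra ℝ 𝕜] [Fintype ι]
    [DecidableEq ι] {s : Set ℝ} (hs : s.OrdConnected) {A Φ : ℝ → Matrix ι ι 𝕜}
    (hA : ∀ t ∈ s, ∀ i j, (A · i j) =O[𝓝[s] t] (1 : ℝ → ℝ))
    (hΦ : ∀ t ∈ s, ∀ i j, HasDerivWithinAt (Φ · i j) ((A t * Φ t) i j) s t)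
    {t₀ : ℝ} (ht₀ : t₀ ∈ s) (h : IsUnit (Φ t₀)) {t : ℝ} (ht : t ∈ s) : IsUnit (Φ t) := by
  refine mulVec_injective_iff_isUnit.1 <|
    (injective_iff_map_eq_zero (Φ t).mulVecLin).2 fun v hv => ?_
  have hv₀ : Φ t₀ *ᵥ v = 0 := mulVec_eq_zero_of_hasDerivWithinAt_mul hs hA hΦ ht ht₀ hv
  exact mulVec_injective_iff_isUnit.2 h (hv₀.trans (mulVec_zero (Φ t₀)).symm)

/-- If `Φ` solves the matrix ODE `Φ̇ = A(t)Φ` (entrywise) with `A` continuous, and `Φ(t₀)`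
is invertible for some `t₀`, then `Φ(t)` is invertible for every `t`. -/
theorem stmt_0 (n : ℕ) (A Φ : ℝ → Matrix (Fin n) (Fin n) ℝ)
    (hA : Continuous A)
    (hΦ : ∀ t i j, HasDerivAt (fun s => Φ s i j) ((A t * Φ t) i j) t)
    (t₀ : ℝ) (h : IsUnit (Φ t₀)) :
    ∀ t, IsUnit (Φ t) := by
  have hA' (t : ℝ) (i j : Fin n) : (A · i j) =O[𝓝[univ] t] (1 : ℝ → ℝ) :=
    (hA.matrix_elem i j).continuousWithinAt.tendsto.isBigO_one ℝ
  exact fun t => stmt_0_general ordConnected_univ (fun r _ => hA' r)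
    (fun r _ i j => (hΦ r i j).hasDerivWithinAt) (mem_univ t₀) h (mem_univ t)
end

section
/- Let A : ℝ → Matrix (Fin n) (Fin n) ℝ and f : ℝ → (Fin n → ℝ) be continuous, let Φ : ℝ → Matrix (Fin n) (Fin n) ℝ satisfy Φ̇(t) = A(t)Φ(t) with Φ(t) invertible for all t, let m ≥ 1, let t₁, …, t_m ∈ [0,1], and let Φ₁, …, Φ_m : ℝ → Matrix (Fin n) (Fin n) ℝ satisfy Φ̇_k(t) = A(t)Φ_k(t) for each k and Σ_{k=1}^{m} Φ_k(t) = Φ(t) for all t. Then for any constant vector C, the function x(t) = Φ(t)·C + Σ_{k=1}^{m} Φ_k(t) · ∫_{t_k}^{t} Φ(s)⁻¹ f(s) ds satisfies ẋ(t) = A(t) x(t) + f(t) for all t. -/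
open scoped Matrix

/-!
Since `∑ k, Φk k = Φ`, the candidate solution is `x = ∑ k, Φk k *ᵥ c k` with coefficients
`c k t = C + ∫ u in ts k..t, (Φ u)⁻¹ *ᵥ f u`, all of which have the same derivative `Φ⁻¹ *ᵥ f`,
whatever their base points. By the product rule `x' = A *ᵥ x + ∑ k, Φk k *ᵥ (c k)'`, and the last
sum collapses to `Φ *ᵥ (Φ⁻¹ *ᵥ f) = f`.
-/

section MatrixCalculus

variable {𝕜 ι κ : Type*} [NontriviallyNormedField 𝕜]

lemma continuous_of_hasDerivAt_entries {E : Type*} [NormedAddCommGroup E] [NormedSpace 𝕜 E]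
    {M M' : 𝕜 → Matrix ι κ E} (hM : ∀ t i j, HasDerivAt (fun s => M s i j) (M' t i j) t) :
    Continuous M :=
  continuous_matrix fun i j => continuous_iff_continuousAt.2 fun t => (hM t i j).continuousAt

variable {R : Type*} [NormedRing R] [NormedAlgebra 𝕜 R] [Fintype κ]

lemma hasDerivAt_mulVec {M : 𝕜 → Matrix ι κ R} {M' : Matrix ι κ R} {v : 𝕜 → κ → R} {v' : κ → R}
    {t : 𝕜} (hM : ∀ i j, HasDerivAt (fun s => M s i j) (M' i j) t) (hv : HasDerivAt v v' t) :
    HasDerivAt (fun s => M s *ᵥ v s) (M' *ᵥ v t + M t *ᵥ v') t := by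
  rw [hasDerivAt_pi] at hv ⊢
  intro i
  simp only [Matrix.mulVec, dotProduct, Pi.add_apply, ← Finset.sum_add_distrib]
  exact HasDerivAt.fun_sum fun j _ => (hM i j).fun_mul (hv j)

lemma hasDerivAt_sum_mulVec_of_matrix_ode {α : Type*} [Fintype α] [Fintype ι] {A : Matrix ι ι R}
    {Φ : α → 𝕜 → Matrix ι κ R} {c : α → 𝕜 → κ → R} {c' : α → κ → R} {t : 𝕜}
    (hΦ : ∀ a i j, HasDerivAt (fun s => Φ a s i j) ((A * Φ a t) i j) t)
    (hc : ∀ a, HasDerivAt (c a) (c' a) t) :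
    HasDerivAt (fun s => ∑ a, Φ a s *ᵥ c a s)
      (A *ᵥ ∑ a, Φ a t *ᵥ c a t + ∑ a, Φ a t *ᵥ c' a) t := by
  simp only [Matrix.mulVec_sum, Matrix.mulVec_mulVec, ← Finset.sum_add_distrib]
  exact HasDerivAt.fun_sum fun a _ => hasDerivAt_mulVec (hΦ a) (hc a)

end MatrixCalculus

lemma continuous_matrix_inv_of_isUnit {X ι R : Type*} [TopologicalSpace X] [Fintype ι]
    [DecidableEq ι] [NormedCommRing R] [HasSummableGeomSeries R] {M : X → Matrix ι ι R}
    (hM : Continuous M) (hunit : ∀ x, IsUnit (M x)) : Continuous fun x => (M x)⁻¹ := by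
  refine continuous_iff_continuousAt.2 fun x => ?_
  obtain ⟨d, hd⟩ := (Matrix.isUnit_iff_isUnit_det _).1 (hunit x)
  have hinv : ContinuousAt Ring.inverse (M x).det := hd ▸ NormedRing.inverse_continuousAt d
  exact (continuousAt_matrix_inv (M x) hinv).comp hM.continuousAt

theorem stmt_3_general {ι κ R : Type*} [Fintype ι] [DecidableEq ι] [Fintype κ]
    [NormedCommRing R] [NormedAlgebra ℝ R] [CompleteSpace R]
    {A : ℝ → Matrix ι ι R} {f : ℝ → ι → R} (hf : Continuous f)
    {Φ : ℝ → Matrix ι ι R} (hinv : ∀ t, IsUnit (Φ t)) (ts : κ → ℝ)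
    {Φk : κ → ℝ → Matrix ι ι R}
    (hΦk : ∀ k t i j, HasDerivAt (fun s => Φk k s i j) ((A t * Φk k t) i j) t)
    (hsum : ∀ t, ∑ k, Φk k t = Φ t) (C : ι → R) (t : ℝ) :
    HasDerivAt
      (fun s => Φ s *ᵥ C + ∑ k, Φk k s *ᵥ ∫ u in ts k..s, (Φ u)⁻¹ *ᵥ f u)
      (A t *ᵥ (Φ t *ᵥ C + ∑ k, Φk k t *ᵥ ∫ u in ts k..t, (Φ u)⁻¹ *ᵥ f u) + f t) t := by
  have hΦcont : Continuous Φ := by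
    simpa only [hsum] using
      continuous_finsetSum Finset.univ fun k _ => continuous_of_hasDerivAt_entries (hΦk k)
  have hintegrand : Continuous fun u => (Φ u)⁻¹ *ᵥ f u :=
    (continuous_matrix_inv_of_isUnit hΦcont hinv).matrix_mulVec hf
  have hcoeff (k : κ) :
      HasDerivAt (fun s => C + ∫ u in ts k..s, (Φ u)⁻¹ *ᵥ f u) ((Φ t)⁻¹ *ᵥ f t) t :=
    (hintegrand.integral_hasStrictDerivAt (ts k) t).hasDerivAt.const_add C
  have hcandidate (s : ℝ) : ∑ k, Φk k s *ᵥ (C + ∫ u in ts k..s, (Φ u)⁻¹ *ᵥ f u) =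
      Φ s *ᵥ C + ∑ k, Φk k s *ᵥ ∫ u in ts k..s, (Φ u)⁻¹ *ᵥ f u := by
    simp only [Matrix.mulVec_add, Finset.sum_add_distrib, ← Matrix.sum_mulVec, hsum]
  have hforcing : ∑ k, Φk k t *ᵥ ((Φ t)⁻¹ *ᵥ f t) = f t := by
    rw [← Matrix.sum_mulVec, hsum, Matrix.mulVec_mulVec,
      Matrix.mul_nonsing_inv _ ((Matrix.isUnit_iff_isUnit_det _).1 (hinv t)), Matrix.one_mulVec]
  simpa only [hcandidate, hforcing] using
    hasDerivAt_sum_mulVec_of_matrix_ode (fun k => hΦk k t) hcoeff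

/-- If `Φ` is a fundamental matrix for `ẋ = A(t)x` with a splitting `Φ₁, …, Φ_m`
(each `Φ_k` solves `Φ̇_k = A(t)Φ_k` and `Σ_k Φ_k = Φ`), then for any constant vector `C`,
`x(t) = Φ(t)C + Σ_k Φ_k(t) ∫_{t_k}^{t} Φ(s)⁻¹ f(s) ds` solves `ẋ = A(t)x + f(t)`. -/
theorem stmt_3 (n m : ℕ) (hm : 1 ≤ m)
    (A : ℝ → Matrix (Fin n) (Fin n) ℝ) (f : ℝ → Fin n → ℝ)
    (hA : Continuous A) (hf : Continuous f)
    (Φ : ℝ → Matrix (Fin n) (Fin n) ℝ)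
    (hΦ : ∀ t i j, HasDerivAt (fun s => Φ s i j) ((A t * Φ t) i j) t)
    (hinv : ∀ t, IsUnit (Φ t))
    (ts : Fin m → ℝ) (hts : ∀ k, ts k ∈ Set.Icc (0 : ℝ) 1)
    (Φk : Fin m → ℝ → Matrix (Fin n) (Fin n) ℝ)
    (hΦk : ∀ k t i j, HasDerivAt (fun s => Φk k s i j) ((A t * Φk k t) i j) t)
    (hsum : ∀ t, ∑ k, Φk k t = Φ t)
    (C : Fin n → ℝ) :
    ∀ t, HasDerivAt
      (fun s => Φ s *ᵥ C + ∑ k, Φk k s *ᵥ ∫ u in ts k..s, (Φ u)⁻¹ *ᵥ f u)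
      (A t *ᵥ (Φ t *ᵥ C + ∑ k, Φk k t *ᵥ ∫ u in ts k..t, (Φ u)⁻¹ *ᵥ f u) + f t) t :=
  stmt_3_general hf hinv ts hΦk hsum C
end

section
/- (Theorem 1, uniqueness part.) Let A : ℝ → Matrix (Fin n) (Fin n) ℝ and f : ℝ → (Fin n → ℝ) be continuous, let 0 = t₁ < t₂ < … < t_m = 1 be points of [0,1] with 2 ≤ m, let F₁, …, F_m be constant n×n real matrices, let Φ be a fundamental matrix (Φ̇ = A(t)Φ, Φ(t) invertible for all t), and suppose the matrix F = Σ_{j=1}^{m} F_j Φ(t_j) is invertible. If x and y both satisfy ẋ(t) = A(t)x(t) + f(t) for all t and the boundary condition Σ_{j=1}^{m} F_j x(t_j) = α, then x = y. -/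
open scoped Matrix

/-!
If `Φ' = A Φ` with `Φ` invertible, then `(Φ⁻¹)' = -Φ⁻¹ A`, so `(Φ⁻¹ z)' = 0` for every solution of
`z' = A z`: homogeneous solutions have the form `z = Φ c` with `c` constant. The difference of two
solutions of the boundary value problem is of this form, and its boundary condition reads
`(∑ j, F j Φ(t j)) c = 0`, which forces `c = 0`.
-/

section FundamentalSolution

variable {𝕜 E : Type*} [NontriviallyNormedField 𝕜] [NormedAddCommGroup E] [NormedSpace 𝕜 E]

/-- `Φ` is a fundamental solution of `z' = A z` on the set `s`: the operator form of a fundamental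
matrix. Derivatives are taken within `s`, so that `s` may be a compact interval. -/
structure IsFundamentalSolutionOn (A Φ : 𝕜 → E →L[𝕜] E) (s : Set 𝕜) : Prop where
  hasDerivWithinAt : ∀ t ∈ s, HasDerivWithinAt Φ (A t * Φ t) s t
  isUnit : ∀ t ∈ s, IsUnit (Φ t)

theorem hasDerivWithinAt_ringInverse {R : Type*} [NormedRing R] [NormedAlgebra 𝕜 R]
    [HasSummableGeomSeries R] {u : 𝕜 → R} {u' : R} {s : Set 𝕜} {t : 𝕜}
    (hu : HasDerivWithinAt u u' s t) (hunit : IsUnit (u t)) :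
    HasDerivWithinAt (fun r ↦ Ring.inverse (u r))
      (-(Ring.inverse (u t) * u' * Ring.inverse (u t))) s t := by
  obtain ⟨v, hv⟩ := hunit
  have hinv := hasFDerivAt_ringInverse (𝕜 := 𝕜) v
  rw [hv] at hinv
  simpa [← hv, Function.comp_def] using hinv.comp_hasDerivWithinAt t hu

namespace IsFundamentalSolutionOn

variable [CompleteSpace E] {A Φ : 𝕜 → E →L[𝕜] E} {s : Set 𝕜}

theorem hasDerivWithinAt_inverse (hΦ : IsFundamentalSolutionOn A Φ s) {t : 𝕜} (ht : t ∈ s) :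
    HasDerivWithinAt (fun r ↦ Ring.inverse (Φ r)) (-(Ring.inverse (Φ t) * A t)) s t := by
  have h := hasDerivWithinAt_ringInverse (hΦ.hasDerivWithinAt t ht) (hΦ.isUnit t ht)
  rwa [mul_assoc, mul_assoc, Ring.mul_inverse_cancel _ (hΦ.isUnit t ht), mul_one] at h

theorem hasDerivWithinAt_inverse_apply (hΦ : IsFundamentalSolutionOn A Φ s) {z : 𝕜 → E} {t : 𝕜}
    (ht : t ∈ s) (hz : HasDerivWithinAt z (A t (z t)) s t) :
    HasDerivWithinAt (fun r ↦ Ring.inverse (Φ r) (z r)) 0 s t := by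
  simpa using (hΦ.hasDerivWithinAt_inverse ht).clm_apply hz

end IsFundamentalSolutionOn

end FundamentalSolution

section ConvexDomain

variable {𝕜 E : Type*} [RCLike 𝕜] [NormedAddCommGroup E] [NormedSpace 𝕜 E] [CompleteSpace E]
  {A Φ : 𝕜 → E →L[𝕜] E} {s : Set 𝕜}

namespace IsFundamentalSolutionOn

theorem eq_apply_inverse_apply (hΦ : IsFundamentalSolutionOn A Φ s) (hs : Convex ℝ s) {z : 𝕜 → E}
    (hz : ∀ t ∈ s, HasDerivWithinAt z (A t (z t)) s t) {t₀ t : 𝕜} (ht₀ : t₀ ∈ s) (ht : t ∈ s) :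
    z t = Φ t (Ring.inverse (Φ t₀) (z t₀)) := by
  have hconst : Ring.inverse (Φ t) (z t) = Ring.inverse (Φ t₀) (z t₀) := by
    have hnorm := hs.norm_image_sub_le_of_norm_hasDerivWithin_le (C := 0)
      (fun r hr ↦ hΦ.hasDerivWithinAt_inverse_apply hr (hz r hr)) (by simp) ht₀ ht
    rwa [zero_mul, norm_le_zero_iff, sub_eq_zero] at hnorm
  rw [← hconst, ← mul_apply_eq_comp, Ring.mul_inverse_cancel _ (hΦ.isUnit t ht),
    one_apply_eq_self]

theorem eqOn_of_sum_boundary_eq (hΦ : IsFundamentalSolutionOn A Φ s) (hs : Convex ℝ s)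
    {G κ : Type*} [AddCommGroup G] [Module 𝕜 G] [Fintype κ] {τ : κ → 𝕜} (hτ : ∀ j, τ j ∈ s)
    {F : κ → E →ₗ[𝕜] G}
    (hF : Function.Injective (∑ j, F j ∘ₗ (Φ (τ j) : E →ₗ[𝕜] E) : E →ₗ[𝕜] G))
    {f x y : 𝕜 → E} (hx : ∀ t ∈ s, HasDerivWithinAt x (A t (x t) + f t) s t)
    (hy : ∀ t ∈ s, HasDerivWithinAt y (A t (y t) + f t) s t)
    (hxy : ∑ j, F j (x (τ j)) = ∑ j, F j (y (τ j))) :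
    Set.EqOn x y s := by
  intro t ht
  have hsub : ∀ r ∈ s, HasDerivWithinAt (x - y) (A r ((x - y) r)) s r := fun r hr ↦ by
    simpa using (hx r hr).sub (hy r hr)
  set c : E := Ring.inverse (Φ t) ((x - y) t)
  have hrepr : ∀ r ∈ s, (x - y) r = Φ r c := fun r hr ↦ hΦ.eq_apply_inverse_apply hs hsub ht hr
  have hc : c = 0 := by
    refine (map_eq_zero_iff _ hF).1 ?_
    calc (∑ j, F j ∘ₗ (Φ (τ j) : E →ₗ[𝕜] E)) c = ∑ j, F j ((x - y) (τ j)) := by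
          simp [hrepr _ (hτ _)]
      _ = 0 := by simp [hxy]
  simpa [hc, sub_eq_zero] using hrepr t ht

end IsFundamentalSolutionOn

end ConvexDomain

section Matrix

variable {𝕜 ι : Type*} [NontriviallyNormedField 𝕜] [CompleteSpace 𝕜] [Fintype ι] [DecidableEq ι]

variable (𝕜 ι) in
/-- A square matrix as a bounded operator on `ι → 𝕜`, acting by `v ↦ M *ᵥ v`. It transfers
the operator results to matrices without choosing a norm on matrices. -/
noncomputable def mulVecCLM : Matrix ι ι 𝕜 ≃ₐ[𝕜] ((ι → 𝕜) →L[𝕜] (ι → 𝕜)) :=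
  Matrix.toLinAlgEquiv'.trans (Module.End.toContinuousLinearMap (ι → 𝕜))

theorem mulVecCLM_apply (M : Matrix ι ι 𝕜) (v : ι → 𝕜) : mulVecCLM 𝕜 ι M v = M *ᵥ v := rfl

theorem hasDerivWithinAt_mulVecCLM {M : 𝕜 → Matrix ι ι 𝕜} {M' : Matrix ι ι 𝕜} {s : Set 𝕜} {t : 𝕜}
    (hM : ∀ i j, HasDerivWithinAt (fun r ↦ M r i j) (M' i j) s t) :
    HasDerivWithinAt (fun r ↦ mulVecCLM 𝕜 ι (M r)) (mulVecCLM 𝕜 ι M') s t := by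
  let L : (ι → ι → 𝕜) →L[𝕜] (ι → 𝕜) →L[𝕜] (ι → 𝕜) :=
    ((mulVecCLM 𝕜 ι).toLinearMap ∘ₗ (Matrix.ofLinearEquiv 𝕜).toLinearMap).toContinuousLinearMap
  have hpi : HasDerivWithinAt (fun r i j ↦ M r i j) (fun i j ↦ M' i j) s t :=
    hasDerivWithinAt_pi.2 fun i ↦ hasDerivWithinAt_pi.2 (hM i)
  exact L.hasFDerivAt.comp_hasDerivWithinAt t hpi

theorem isFundamentalSolutionOn_mulVecCLM {A Φ : 𝕜 → Matrix ι ι 𝕜} {s : Set 𝕜}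
    (hΦ : ∀ t ∈ s, ∀ i j, HasDerivWithinAt (fun r ↦ Φ r i j) ((A t * Φ t) i j) s t)
    (hinv : ∀ t ∈ s, IsUnit (Φ t)) :
    IsFundamentalSolutionOn (fun t ↦ mulVecCLM 𝕜 ι (A t)) (fun t ↦ mulVecCLM 𝕜 ι (Φ t)) s where
  hasDerivWithinAt t ht := by
    simpa only [map_mul] using hasDerivWithinAt_mulVecCLM (hΦ t ht)
  isUnit t ht := (hinv t ht).map (mulVecCLM 𝕜 ι)

end Matrix

theorem stmt_6_general {𝕜 ι κ ρ : Type*} [RCLike 𝕜] [Fintype ι] [DecidableEq ι] [Fintype κ]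
    {s : Set 𝕜} (hs : Convex ℝ s)
    {A Φ : 𝕜 → Matrix ι ι 𝕜} {f : 𝕜 → ι → 𝕜}
    (hΦ : ∀ t ∈ s, ∀ i j, HasDerivWithinAt (fun r ↦ Φ r i j) ((A t * Φ t) i j) s t)
    (hinv : ∀ t ∈ s, IsUnit (Φ t)) {τ : κ → 𝕜} (hτ : ∀ j, τ j ∈ s) {F : κ → Matrix ρ ι 𝕜}
    (hF : Function.Injective (∑ j, F j * Φ (τ j)).mulVec) {x y : 𝕜 → ι → 𝕜}
    (hx : ∀ t ∈ s, HasDerivWithinAt x (A t *ᵥ x t + f t) s t)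
    (hy : ∀ t ∈ s, HasDerivWithinAt y (A t *ᵥ y t + f t) s t)
    (hxy : ∑ j, F j *ᵥ x (τ j) = ∑ j, F j *ᵥ y (τ j)) :
    Set.EqOn x y s := by
  have hsum : ⇑(∑ j, (F j).mulVecLin ∘ₗ (mulVecCLM 𝕜 ι (Φ (τ j)) : (ι → 𝕜) →ₗ[𝕜] ι → 𝕜) :
      (ι → 𝕜) →ₗ[𝕜] ρ → 𝕜) = (∑ j, F j * Φ (τ j)).mulVec := by
    ext1 v
    simp [mulVecCLM_apply, Matrix.sum_mulVec]
  exact (isFundamentalSolutionOn_mulVecCLM hΦ hinv).eqOn_of_sum_boundary_eq hs hτ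
    (F := fun j ↦ (F j).mulVecLin) (hsum ▸ hF) hx hy hxy

/-- Theorem 1 (uniqueness part): under the condition `det F ≠ 0` with
`F = Σ_j F_j Φ(t_j)`, the many-point boundary value problem
`ẋ = A(t)x + f(t)`, `Σ_j F_j x(t_j) = α` has at most one solution. -/
theorem stmt_6 (n m : ℕ) (hm : 2 ≤ m)
    (A : ℝ → Matrix (Fin n) (Fin n) ℝ) (f : ℝ → Fin n → ℝ)
    (hA : Continuous A) (hf : Continuous f)
    (ts : Fin m → ℝ) (hmono : StrictMono ts)
    (h0 : ts ⟨0, by omega⟩ = 0) (h1 : ts ⟨m - 1, by omega⟩ = 1)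
    (F : Fin m → Matrix (Fin n) (Fin n) ℝ)
    (Φ : ℝ → Matrix (Fin n) (Fin n) ℝ)
    (hΦ : ∀ t i j, HasDerivAt (fun s => Φ s i j) ((A t * Φ t) i j) t)
    (hinv : ∀ t, IsUnit (Φ t))
    (hF : IsUnit (∑ j, F j * Φ (ts j)))
    (α : Fin n → ℝ) (x y : ℝ → Fin n → ℝ)
    (hx : ∀ t, HasDerivAt x (A t *ᵥ x t + f t) t)
    (hxb : ∑ j, F j *ᵥ x (ts j) = α)
    (hy : ∀ t, HasDerivAt y (A t *ᵥ y t + f t) t)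
    (hyb : ∑ j, F j *ᵥ y (ts j) = α) :
    x = y :=
  funext fun t ↦ stmt_6_general convex_univ (fun t _ i j ↦ (hΦ t i j).hasDerivWithinAt)
    (fun t _ ↦ hinv t) (fun j ↦ Set.mem_univ (ts j)) (Matrix.mulVec_injective_of_isUnit hF)
    (fun t _ ↦ (hx t).hasDerivWithinAt) (fun t _ ↦ (hy t).hasDerivWithinAt)
    (hxb.trans hyb.symm) (Set.mem_univ t)
end

section
/- (Theorem 1, existence part with explicit representation.) Let A : ℝ → Matrix (Fin n) (Fin n) ℝ and f : ℝ → (Fin n → ℝ) be continuous, let 0 = t₁ < t₂ < … < t_m = 1 with 2 ≤ m, let F₁, …, F_m be constant n×n real matrices, let Φ be a fundamental matrix (Φ̇ = A(t)Φ, Φ(t) invertible for all t), let Φ₁, …, Φ_m satisfy Φ̇_k = A(t)Φ_k with Σ_{k=1}^{m} Φ_k(t) = Φ(t), and suppose F = Σ_{j=1}^{m} F_j Φ(t_j) is invertible. Set C = F⁻¹ (α − Σ_{j=1}^{m} F_j Σ_{k=1}^{m} Φ_k(t_j) ∫_{t_k}^{t_j} Φ(s)⁻¹ f(s) ds). Then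 x(t) = Φ(t)C + Σ_{k=1}^{m} Φ_k(t) ∫_{t_k}^{t} Φ(s)⁻¹ f(s) ds satisfies ẋ(t) = A(t)x(t) + f(t) for all t and Σ_{j=1}^{m} F_j x(t_j) = α. -/
open scoped Matrix

/-!
Each term `Φₖ(t) ∫_{τₖ}^t Φ⁻¹f` satisfies `ẏ = A y + Φₖ Φ⁻¹ f`, whatever its base point `τₖ`, so the
sum over a splitting `∑ₖ Φₖ = Φ` has inhomogeneity `(∑ₖ Φₖ) Φ⁻¹ f = f`. Adding the homogeneous
solution `Φ C` leaves the equation unchanged, and the boundary condition becomes the linear system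
`(∑ⱼ Fⱼ Φ(tⱼ)) C = α - ∑ⱼ Fⱼ p(tⱼ)`, where `p` is the particular solution given by that sum.
-/

theorem mulVec_inv_mulVec {n R : Type*} [Fintype n] [DecidableEq n] [CommRing R]
    {M : Matrix n n R} (hM : IsUnit M) (v : n → R) : M *ᵥ (M⁻¹ *ᵥ v) = v := by
  rw [Matrix.mulVec_mulVec, Matrix.mul_nonsing_inv _ ((Matrix.isUnit_iff_isUnit_det _).1 hM),
    Matrix.one_mulVec]

theorem hasDerivAt_matrix_mulVec {𝕜 R m n : Type*} [NontriviallyNormedField 𝕜] [NormedRing R]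
    [NormedAlgebra 𝕜 R] [Finite m] [Fintype n] {M : 𝕜 → Matrix m n R} {M' : Matrix m n R}
    {v : 𝕜 → n → R} {v' : n → R} {t : 𝕜}
    (hM : ∀ i j, HasDerivAt (fun s => M s i j) (M' i j) t) (hv : HasDerivAt v v' t) :
    HasDerivAt (fun s => M s *ᵥ v s) (M' *ᵥ v t + M t *ᵥ v') t := by
  cases nonempty_fintype m
  rw [hasDerivAt_pi] at hv ⊢
  intro i
  refine (HasDerivAt.fun_sum fun j _ => (hM i j).mul (hv j)).congr_deriv ?_
  exact Finset.sum_add_distrib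

theorem continuous_matrix_inv {X 𝕜 n : Type*} [TopologicalSpace X] [NormedField 𝕜]
    [Fintype n] [DecidableEq n] {M : X → Matrix n n 𝕜} (hM : Continuous M)
    (hinv : ∀ t, IsUnit (M t)) : Continuous fun t => (M t)⁻¹ := by
  refine continuous_iff_continuousAt.2 fun t => ?_
  refine (continuousAt_matrix_inv (M t) ?_).comp hM.continuousAt
  simpa only [Ring.inverse_eq_inv'] using
    continuousAt_inv₀ ((Matrix.isUnit_iff_isUnit_det _).1 (hinv t)).ne_zero

theorem sum_mulVec_add_eq_of_eq_inv_mulVec {ι n R : Type*} [Fintype ι] [Fintype n] [DecidableEq n]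
    [CommRing R] {F Φ : ι → Matrix n n R} {p : ι → n → R} {α C : n → R}
    (hF : IsUnit (∑ j, F j * Φ j))
    (hC : C = (∑ j, F j * Φ j)⁻¹ *ᵥ (α - ∑ j, F j *ᵥ p j)) :
    ∑ j, F j *ᵥ (Φ j *ᵥ C + p j) = α :=
  calc ∑ j, F j *ᵥ (Φ j *ᵥ C + p j)
      = (∑ j, F j * Φ j) *ᵥ C + ∑ j, F j *ᵥ p j := by
        simp only [Matrix.mulVec_add, Matrix.mulVec_mulVec, Finset.sum_add_distrib,
          Matrix.sum_mulVec]
    _ = (α - ∑ j, F j *ᵥ p j) + ∑ j, F j *ᵥ p j := by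
        rw [hC, mulVec_inv_mulVec hF]
    _ = α := sub_add_cancel _ _

/-- `Ψ` solves the matrix differential equation `Ψ̇ = A(t)Ψ`. The derivative is taken entrywise, so
no norm on matrices has to be chosen. -/
def IsMatrixSolution {𝕜 R n : Type*} [NontriviallyNormedField 𝕜] [NormedRing R] [NormedAlgebra 𝕜 R]
    [Fintype n] (A Ψ : 𝕜 → Matrix n n R) : Prop :=
  ∀ t i j, HasDerivAt (fun s => Ψ s i j) ((A t * Ψ t) i j) t

namespace IsMatrixSolution

variable {𝕜 R n κ : Type*} [NontriviallyNormedField 𝕜] [NormedRing R] [NormedAlgebra 𝕜 R]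
  [Fintype n] {A : 𝕜 → Matrix n n R}

theorem continuous {Ψ : 𝕜 → Matrix n n R} (hΨ : IsMatrixSolution A Ψ) : Continuous Ψ :=
  continuous_matrix fun i j => continuous_iff_continuousAt.2 fun t => (hΨ t i j).continuousAt

theorem hasDerivAt_mulVec {Ψ : 𝕜 → Matrix n n R} (hΨ : IsMatrixSolution A Ψ)
    {v : 𝕜 → n → R} {v' : n → R} {t : 𝕜} (hv : HasDerivAt v v' t) :
    HasDerivAt (fun s => Ψ s *ᵥ v s) (A t *ᵥ (Ψ t *ᵥ v t) + Ψ t *ᵥ v') t := by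
  simpa only [Matrix.mulVec_mulVec] using hasDerivAt_matrix_mulVec (hΨ t) hv

theorem hasDerivAt_mulVec_const {Ψ : 𝕜 → Matrix n n R} (hΨ : IsMatrixSolution A Ψ)
    (c : n → R) (t : 𝕜) : HasDerivAt (fun s => Ψ s *ᵥ c) (A t *ᵥ (Ψ t *ᵥ c)) t := by
  simpa only [Matrix.mulVec_zero, add_zero] using hΨ.hasDerivAt_mulVec (hasDerivAt_const t c)

theorem hasDerivAt_sum_mulVec [Fintype κ] {Ψ : κ → 𝕜 → Matrix n n R}
    (hΨ : ∀ k, IsMatrixSolution A (Ψ k)) {v : κ → 𝕜 → n → R} {v' : n → R} {t : 𝕜}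
    (hv : ∀ k, HasDerivAt (v k) v' t) :
    HasDerivAt (fun s => ∑ k, Ψ k s *ᵥ v k s)
      (A t *ᵥ (∑ k, Ψ k t *ᵥ v k t) + (∑ k, Ψ k t) *ᵥ v') t := by
  refine (HasDerivAt.fun_sum fun k _ => (hΨ k).hasDerivAt_mulVec (hv k)).congr_deriv ?_
  rw [Finset.sum_add_distrib, Matrix.mulVec_sum, Matrix.sum_mulVec]

end IsMatrixSolution

section Splitting

variable {𝕜 n κ : Type*} [RCLike 𝕜] [Fintype n] [DecidableEq n] [Fintype κ]

/-- The particular solution `∑ₖ Φₖ(t) ∫_{τₖ}^t Φ(s)⁻¹ f(s) ds` of `ẋ = A(t)x + f(t)` given by a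
splitting `∑ₖ Φₖ = Φ` of a fundamental matrix, each part having its own base point `τₖ`. -/
noncomputable def splittingSolution (Φ : ℝ → Matrix n n 𝕜) (Φk : κ → ℝ → Matrix n n 𝕜) (τ : κ → ℝ)
    (f : ℝ → n → 𝕜) (t : ℝ) : n → 𝕜 :=
  ∑ k, Φk k t *ᵥ ∫ s in τ k..t, (Φ s)⁻¹ *ᵥ f s

variable {A Φ : ℝ → Matrix n n 𝕜} {Φk : κ → ℝ → Matrix n n 𝕜} {f : ℝ → n → 𝕜}

theorem hasDerivAt_splittingSolution (hf : Continuous f) (hΦ : Continuous Φ)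
    (hinv : ∀ t, IsUnit (Φ t)) (hΦk : ∀ k, IsMatrixSolution A (Φk k))
    (hsum : ∀ t, ∑ k, Φk k t = Φ t) (τ : κ → ℝ) (t : ℝ) :
    HasDerivAt (splittingSolution Φ Φk τ f) (A t *ᵥ splittingSolution Φ Φk τ f t + f t) t := by
  have hg : Continuous fun s => (Φ s)⁻¹ *ᵥ f s := (continuous_matrix_inv hΦ hinv).matrix_mulVec hf
  have hint (k : κ) : HasDerivAt (fun u => ∫ s in τ k..u, (Φ s)⁻¹ *ᵥ f s) ((Φ t)⁻¹ *ᵥ f t) t :=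
    hg.integral_hasStrictDerivAt (τ k) t |>.hasDerivAt
  have hcancel : (∑ k, Φk k t) *ᵥ ((Φ t)⁻¹ *ᵥ f t) = f t := by
    rw [hsum, mulVec_inv_mulVec (hinv t)]
  have hderiv := IsMatrixSolution.hasDerivAt_sum_mulVec hΦk hint
  rwa [hcancel] at hderiv

theorem stmt_7_general {ι : Type*} [Fintype ι] (hf : Continuous f) (hΦ : IsMatrixSolution A Φ)
    (hinv : ∀ t, IsUnit (Φ t)) (hΦk : ∀ k, IsMatrixSolution A (Φk k))
    (hsum : ∀ t, ∑ k, Φk k t = Φ t) (τ : κ → ℝ) (ts : ι → ℝ) (F : ι → Matrix n n 𝕜)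
    (hF : IsUnit (∑ j, F j * Φ (ts j))) (α C : n → 𝕜)
    (hC : C = (∑ j, F j * Φ (ts j))⁻¹ *ᵥ
      (α - ∑ j, F j *ᵥ splittingSolution Φ Φk τ f (ts j)))
    (x : ℝ → n → 𝕜) (hx : ∀ t, x t = Φ t *ᵥ C + splittingSolution Φ Φk τ f t) :
    (∀ t, HasDerivAt x (A t *ᵥ x t + f t) t) ∧ ∑ j, F j *ᵥ x (ts j) = α := by
  obtain rfl : x = fun t => Φ t *ᵥ C + splittingSolution Φ Φk τ f t := funext hx
  refine ⟨fun t => ?_, sum_mulVec_add_eq_of_eq_inv_mulVec hF hC⟩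
  have hhom := hΦ.hasDerivAt_mulVec_const C t
  have hpart := hasDerivAt_splittingSolution hf hΦ.continuous hinv hΦk hsum τ t
  simpa only [Matrix.mulVec_add, add_assoc] using hhom.fun_add hpart

end Splitting

/-- Theorem 1 (existence part with explicit representation): with
`C = F⁻¹ (α − Σ_j F_j Σ_k Φ_k(t_j) ∫_{t_k}^{t_j} Φ(s)⁻¹ f(s) ds)`, the function
`x(t) = Φ(t)C + Σ_k Φ_k(t) ∫_{t_k}^{t} Φ(s)⁻¹ f(s) ds` solves `ẋ = A(t)x + f(t)` and
satisfies the boundary condition `Σ_j F_j x(t_j) = α`. -/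
theorem stmt_7 (n m : ℕ) (hm : 2 ≤ m)
    (A : ℝ → Matrix (Fin n) (Fin n) ℝ) (f : ℝ → Fin n → ℝ)
    (hA : Continuous A) (hf : Continuous f)
    (ts : Fin m → ℝ) (hmono : StrictMono ts)
    (h0 : ts ⟨0, by omega⟩ = 0) (h1 : ts ⟨m - 1, by omega⟩ = 1)
    (F : Fin m → Matrix (Fin n) (Fin n) ℝ)
    (Φ : ℝ → Matrix (Fin n) (Fin n) ℝ)
    (hΦ : ∀ t i j, HasDerivAt (fun s => Φ s i j) ((A t * Φ t) i j) t)
    (hinv : ∀ t, IsUnit (Φ t))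
    (Φk : Fin m → ℝ → Matrix (Fin n) (Fin n) ℝ)
    (hΦk : ∀ k t i j, HasDerivAt (fun s => Φk k s i j) ((A t * Φk k t) i j) t)
    (hsum : ∀ t, ∑ k, Φk k t = Φ t)
    (hF : IsUnit (∑ j, F j * Φ (ts j)))
    (α : Fin n → ℝ)
    (C : Fin n → ℝ)
    (hC : C = (∑ j, F j * Φ (ts j))⁻¹ *ᵥ
      (α - ∑ j, F j *ᵥ ∑ k, Φk k (ts j) *ᵥ ∫ s in ts k..ts j, (Φ s)⁻¹ *ᵥ f s))
    (x : ℝ → Fin n → ℝ)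
    (hxdef : ∀ t, x t = Φ t *ᵥ C + ∑ k, Φk k t *ᵥ ∫ s in ts k..t, (Φ s)⁻¹ *ᵥ f s) :
    (∀ t, HasDerivAt x (A t *ᵥ x t + f t) t) ∧ ∑ j, F j *ᵥ x (ts j) = α :=
  stmt_7_general hf hΦ hinv hΦk hsum ts ts F hF α C hC x hxdef
end

section
/- (Theorem 1.) Let A : ℝ → Matrix (Fin n) (Fin n) ℝ and f : ℝ → (Fin n → ℝ) be continuous, let 0 = t₁ < t₂ < … < t_m = 1 with 2 ≤ m, let F₁, …, F_m be constant n×n real matrices, let α ∈ ℝⁿ, let Φ be a fundamental matrix (Φ̇ = A(t)Φ, Φ(t) invertible for all t), and suppose F = Σ_{j=1}^{m} F_j Φ(t_j) is invertible. Then there exists a unique function x : ℝ → (Fin n → ℝ) satisfying ẋ(t) = A(t)x(t) + f(t) for all t and Σ_{j=1}^{m} F_j x(t_j) = α. -/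
open scoped Matrix

/-!
If `Φ` is a fundamental solution, differentiating `Φ⁻¹ x` turns `ẋ = A x + f` into
`(Φ⁻¹ x)˙ = Φ⁻¹ f`. Hence the solutions are exactly `x = Φ c + p` with `c` a constant vector and
`p t = Φ t ∫₀ᵗ Φ⁻¹ f`, and a linear boundary condition `B x = α` becomes the linear equation
`B (Φ c) = α - B p` for `c`. For the many-point condition its left-hand side is `F c`.
-/

open scoped Ring

section Primitive

variable {E : Type*} [NormedAddCommGroup E] [NormedSpace ℝ E] [CompleteSpace E]

theorem forall_hasDerivAt_iff_exists_eq_const_add_integral {y g : ℝ → E} (hg : Continuous g)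
    (a : ℝ) :
    (∀ t, HasDerivAt y (g t) t) ↔ ∃ c, ∀ t, y t = c + ∫ s in a..t, g s := by
  refine ⟨fun hy => ⟨y a, fun t => ?_⟩, ?_⟩
  · rw [intervalIntegral.integral_eq_sub_of_hasDerivAt (fun s _ => hy s)
      (hg.intervalIntegrable a t), add_sub_cancel]
  · rintro ⟨c, hc⟩ t
    rw [funext hc]
    exact (hg.integral_hasStrictDerivAt a t).hasDerivAt.const_add c

end Primitive

section FundamentalSolution

variable {E : Type*} [NormedAddCommGroup E] [NormedSpace ℝ E]

theorem apply_ringInverse_apply {T : E →L[ℝ] E} (hT : IsUnit T) (v : E) : T (T⁻¹ʳ v) = v :=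
  DFunLike.congr_fun (Ring.mul_inverse_cancel T hT) v

theorem ringInverse_apply_apply {T : E →L[ℝ] E} (hT : IsUnit T) (v : E) : T⁻¹ʳ (T v) = v :=
  DFunLike.congr_fun (Ring.inverse_mul_cancel T hT) v

/-- `Φ` is a fundamental solution of the homogeneous equation `ẋ = A(t)x` in a normed space: an
operator-valued solution which is invertible at all times. This is the notion of a fundamental
matrix, with operators in place of matrices. -/
structure IsFundamentalSolution (A Φ : ℝ → E →L[ℝ] E) : Prop where
  hasDerivAt : ∀ t, HasDerivAt Φ (A t * Φ t) t
  isUnit : ∀ t, IsUnit (Φ t)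

/-- The solution of `ẋ = A(t)x + f(t)` vanishing at time `0`, given by variation of constants from
a fundamental solution `Φ` of the homogeneous equation. -/
noncomputable def particularSolution (Φ : ℝ → E →L[ℝ] E) (f : ℝ → E) (t : ℝ) : E :=
  Φ t (∫ s in (0 : ℝ)..t, (Φ s)⁻¹ʳ (f s))

namespace IsFundamentalSolution

variable [CompleteSpace E] {A Φ : ℝ → E →L[ℝ] E} {f x : ℝ → E}

theorem hasDerivAt_ringInverse (hΦ : IsFundamentalSolution A Φ) (t : ℝ) :
    HasDerivAt (fun s => (Φ s)⁻¹ʳ) (-((Φ t)⁻¹ʳ * A t)) t := by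
  obtain ⟨u, hu⟩ := hΦ.isUnit t
  have hinv : HasFDerivAt Ring.inverse _ (Φ t) := hu ▸ hasFDerivAt_ringInverse (𝕜 := ℝ) u
  refine (hinv.comp_hasDerivAt t (hΦ.hasDerivAt t)).congr_deriv ?_
  simp [← hu, mul_assoc]

theorem hasDerivAt_iff_hasDerivAt_ringInverse_apply (hΦ : IsFundamentalSolution A Φ) {v : E}
    {t : ℝ} :
    HasDerivAt x (A t (x t) + v) t ↔
      HasDerivAt (fun s => (Φ s)⁻¹ʳ (x s)) ((Φ t)⁻¹ʳ v) t := by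
  refine ⟨fun hx => ?_, fun hy => ?_⟩
  · refine ((hΦ.hasDerivAt_ringInverse t).clm_apply hx).congr_deriv ?_
    simp
  · have hΦy := (hΦ.hasDerivAt t).clm_apply hy
    simpa only [mul_apply_eq_comp, apply_ringInverse_apply (hΦ.isUnit _)] using hΦy

theorem continuous_ringInverse_apply (hΦ : IsFundamentalSolution A Φ) (hf : Continuous f) :
    Continuous fun t => (Φ t)⁻¹ʳ (f t) :=
  (continuous_iff_continuousAt.2 fun t => (hΦ.hasDerivAt_ringInverse t).continuousAt).clm_apply hf

theorem forall_hasDerivAt_iff_exists_eq_add_particularSolution (hΦ : IsFundamentalSolution A Φ)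
    (hf : Continuous f) :
    (∀ t, HasDerivAt x (A t (x t) + f t) t) ↔
      ∃ c, x = (fun t => Φ t c) + particularSolution Φ f := by
  simp only [hΦ.hasDerivAt_iff_hasDerivAt_ringInverse_apply,
    forall_hasDerivAt_iff_exists_eq_const_add_integral (hΦ.continuous_ringInverse_apply hf) 0]
  refine exists_congr fun c => ?_
  simp only [funext_iff, Pi.add_apply, particularSolution, ← map_add]
  refine forall_congr' fun t => ⟨fun h => ?_, fun h => ?_⟩
  · rw [← h, apply_ringInverse_apply (hΦ.isUnit _)]
  · rw [h, ringInverse_apply_apply (hΦ.isUnit t)]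

end IsFundamentalSolution

theorem stmt_8_general [CompleteSpace E] {G : Type*} [AddCommGroup G] [Module ℝ G]
    {A Φ : ℝ → E →L[ℝ] E} {f : ℝ → E} (hΦ : IsFundamentalSolution A Φ) (hf : Continuous f)
    (B : (ℝ → E) →ₗ[ℝ] G) (hB : Function.Bijective fun c => B fun t => Φ t c) (α : G) :
    ∃! x : ℝ → E, (∀ t, HasDerivAt x (A t (x t) + f t) t) ∧ B x = α := by
  simp only [hΦ.forall_hasDerivAt_iff_exists_eq_add_particularSolution hf]
  obtain ⟨c, hc, hc_unique⟩ := hB.existsUnique (α - B (particularSolution Φ f))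
  refine ⟨_, ⟨⟨c, rfl⟩, ?_⟩, ?_⟩
  · rw [map_add, hc, sub_add_cancel]
  · rintro _ ⟨⟨d, rfl⟩, hd⟩
    rw [hc_unique d (eq_sub_of_add_eq (by rwa [map_add] at hd))]

end FundamentalSolution

section Matrix

variable {n : Type*} [Fintype n]

/-- The boundary operator `x ↦ ∑ j, F j *ᵥ x (ts j)` of a many-point boundary value problem. -/
def manyPointOperator {m k : Type*} [Fintype m] (F : m → Matrix k n ℝ) (ts : m → ℝ) :
    (ℝ → n → ℝ) →ₗ[ℝ] k → ℝ :=
  ∑ j, (F j).mulVecLin ∘ₗ LinearMap.proj (ts j)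

theorem manyPointOperator_apply {m k : Type*} [Fintype m] (F : m → Matrix k n ℝ) (ts : m → ℝ)
    (x : ℝ → n → ℝ) : manyPointOperator F ts x = ∑ j, F j *ᵥ x (ts j) := by
  simp [manyPointOperator]

theorem manyPointOperator_mulVec {m k l : Type*} [Fintype m] [Fintype l] (F : m → Matrix k n ℝ)
    (ts : m → ℝ) (Φ : ℝ → Matrix n l ℝ) (c : l → ℝ) :
    manyPointOperator F ts (fun t => Φ t *ᵥ c) = (∑ j, F j * Φ (ts j)) *ᵥ c := by
  simp only [manyPointOperator_apply, Matrix.mulVec_mulVec, Matrix.sum_mulVec]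

variable [DecidableEq n]

/-- Real square matrices as continuous operators. The target carries a norm, whereas matrices have
no canonical one. -/
noncomputable def matrixToCLM : Matrix n n ℝ ≃ₐ[ℝ] ((n → ℝ) →L[ℝ] n → ℝ) :=
  Matrix.toLinAlgEquiv'.trans (Module.End.toContinuousLinearMap (n → ℝ))

theorem matrixToCLM_apply (M : Matrix n n ℝ) (v : n → ℝ) : matrixToCLM M v = M *ᵥ v :=
  rfl

theorem hasDerivAt_matrixToCLM {Φ : ℝ → Matrix n n ℝ} {Φ' : Matrix n n ℝ} {t : ℝ}
    (h : ∀ i j, HasDerivAt (fun s => Φ s i j) (Φ' i j) t) :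
    HasDerivAt (fun s => matrixToCLM (Φ s)) (matrixToCLM Φ') t := by
  have expand (M : Matrix n n ℝ) :
      matrixToCLM M = ∑ i, ∑ j, M i j • matrixToCLM (Matrix.single i j (1 : ℝ)) := by
    conv_lhs => rw [Matrix.matrix_eq_sum_single M]
    simp only [map_sum, ← map_smul, Matrix.smul_single, smul_eq_mul, mul_one]
  rw [funext fun s => expand (Φ s), expand Φ']
  exact .fun_sum fun i _ => .fun_sum fun j _ =>
    (h i j).smul_const (matrixToCLM (Matrix.single i j (1 : ℝ)))

theorem isFundamentalSolution_matrixToCLM {A Φ : ℝ → Matrix n n ℝ}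
    (hΦ : ∀ t i j, HasDerivAt (fun s => Φ s i j) ((A t * Φ t) i j) t)
    (hinv : ∀ t, IsUnit (Φ t)) :
    IsFundamentalSolution (fun t => matrixToCLM (A t)) (fun t => matrixToCLM (Φ t)) where
  hasDerivAt t := map_mul matrixToCLM (A t) (Φ t) ▸ hasDerivAt_matrixToCLM (hΦ t)
  isUnit t := (hinv t).map matrixToCLM

theorem bijective_manyPointOperator_mulVec {m : Type*} [Fintype m] {F : m → Matrix n n ℝ}
    {ts : m → ℝ} {Φ : ℝ → Matrix n n ℝ} (hF : IsUnit (∑ j, F j * Φ (ts j))) :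
    Function.Bijective fun c => manyPointOperator F ts fun t => Φ t *ᵥ c := by
  simp only [manyPointOperator_mulVec]
  exact ⟨Matrix.mulVec_injective_iff_isUnit.2 hF, Matrix.mulVec_surjective_iff_isUnit.2 hF⟩

end Matrix

/-- Theorem 1: under the condition that `F = Σ_j F_j Φ(t_j)` is invertible, the many-point
boundary value problem `ẋ = A(t)x + f(t)`, `Σ_j F_j x(t_j) = α` has a unique solution. -/
theorem stmt_8 (n m : ℕ) (hm : 2 ≤ m)
    (A : ℝ → Matrix (Fin n) (Fin n) ℝ) (f : ℝ → Fin n → ℝ)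
    (hA : Continuous A) (hf : Continuous f)
    (ts : Fin m → ℝ) (hmono : StrictMono ts)
    (h0 : ts ⟨0, by omega⟩ = 0) (h1 : ts ⟨m - 1, by omega⟩ = 1)
    (F : Fin m → Matrix (Fin n) (Fin n) ℝ)
    (α : Fin n → ℝ)
    (Φ : ℝ → Matrix (Fin n) (Fin n) ℝ)
    (hΦ : ∀ t i j, HasDerivAt (fun s => Φ s i j) ((A t * Φ t) i j) t)
    (hinv : ∀ t, IsUnit (Φ t))
    (hF : IsUnit (∑ j, F j * Φ (ts j))) :
    ∃! x : ℝ → Fin n → ℝ,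
      (∀ t, HasDerivAt x (A t *ᵥ x t + f t) t) ∧ ∑ j, F j *ᵥ x (ts j) = α := by
  simpa only [matrixToCLM_apply, manyPointOperator_apply] using
    stmt_8_general (isFundamentalSolution_matrixToCLM hΦ hinv) hf (manyPointOperator F ts)
      (bijective_manyPointOperator_mulVec hF) α
end
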